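/- Let w lie in the conjugacy class C_α of W̃ and suppose w is conjugate under W to w_α(b). Then Tr(Dτ^j w, V^{⊗n}) = 0 unless α satisfies condition (2.6.1) for j; and if α satisfies (2.6.1), then Tr(Dτ^j w, V^{⊗n}) = h^{l(α[j])}·ζ^{−(Δ(α)+b)jd}·p_{α[j]}(𝒳_j), where h = h_j. -/

import Mathlib

/-!
Common framework for formalizing T. Shoji, "Green functions associated to
complex reflection groups, II" (arXiv:math/0105053).

We model:
* `e`-partitions of `n` as functions `ZMod e → Multiset ℕ`;
* the complex reflection group `W̃ = G(e,1,n)` as the semidirect product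
  `(Fin n → Multiplicative (ZMod e)) ⋊ Equiv.Perm (Fin n)`, and
  `W = G(e,p,n)` as the kernel of the mod-`p` sum character;
* the tensor space `V^{⊗n}` concretely via matrices indexed by
  `Fin n → (Σ k : ZMod e, Fin (m k))`;
* symmetric functions in the (finitely many, `m k ≥ n`) variables
  `x_i^{(k)}` in evaluated form, i.e. as functions of an assignment
  `xv : (Σ k : ZMod e, Fin (m k)) → ℂ`.
-/

open scoped BigOperators

attribute [local instance] Classical.propDecidable

namespace GreenII

/-! ## Combinatorics of e-partitions -/

/-- An `e`-partition of `n`: a tuple of partitions (multisets of positive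
integers) indexed by `ZMod e`, with total size `n`. -/
def IsEPartition (e : ℕ) [NeZero e] (n : ℕ) (α : ZMod e → Multiset ℕ) : Prop :=
  (∀ k, ∀ x ∈ α k, 0 < x) ∧ (∑ k : ZMod e, (α k).sum) = n

/-- The shift operator `θ = θ_p`, `θ(α)^{(k)} = α^{(k-d)}`. -/
def theta (e : ℕ) [NeZero e] (d : ℕ) (α : ZMod e → Multiset ℕ) : ZMod e → Multiset ℕ :=
  fun k => α (k - (d : ZMod e))

/-- `c_{α,p}`: the size of the `θ`-orbit of `α`. -/
noncomputable def csize (e : ℕ) [NeZero e] (d : ℕ) (α : ZMod e → Multiset ℕ) : ℕ :=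
  Function.minimalPeriod (theta e d) α

/-- `Δ(α) = ∑_k k · l(α^{(k)})`. -/
def Delta (e : ℕ) [NeZero e] (α : ZMod e → Multiset ℕ) : ℕ :=
  ∑ k : ZMod e, k.val * (α k).card

/-- `l(α) = ∑_k l(α^{(k)})`, the total number of parts. -/
def lenE (e : ℕ) [NeZero e] (α : ZMod e → Multiset ℕ) : ℕ :=
  ∑ k : ZMod e, (α k).card

/-- `α` and `β` lie in the same `θ`-orbit. -/
def SameOrbit (e : ℕ) [NeZero e] (d : ℕ) (α β : ZMod e → Multiset ℕ) : Prop :=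
  ∃ i, (theta e d)^[i] α = β

/-! ## The groups `W̃ = G(e,1,n)` and `W = G(e,p,n)` -/

/-- The "diagonal" part of `G(e,1,n)`. -/
abbrev NC (e n : ℕ) := Fin n → Multiplicative (ZMod e)

/-- The permutation action of `𝔖_n` on the diagonal part. -/
def permAut (e n : ℕ) (x : Equiv.Perm (Fin n)) : NC e n ≃* NC e n where
  toFun f := f ∘ ⇑x.symm
  invFun f := f ∘ ⇑x
  left_inv f := by funext i; simp
  right_inv f := by funext i; simp
  map_mul' f g := rfl

def permHom (e n : ℕ) : Equiv.Perm (Fin n) →* MulAut (NC e n) where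
  toFun x := permAut e n x
  map_one' := rfl
  map_mul' x y := rfl

/-- `W̃ = G(e,1,n) ≅ (ℤ/eℤ)^n ⋊ 𝔖_n`, with `w = x(a_1,…,a_n)` recorded as
`⟨(a_i), x⟩`. -/
abbrev Wt (e n : ℕ) := NC e n ⋊[permHom e n] Equiv.Perm (Fin n)

noncomputable instance WtFintype (e n : ℕ) [NeZero e] : Fintype (Wt e n) :=
  Fintype.ofEquiv (NC e n × Equiv.Perm (Fin n))
    { toFun := fun x => ⟨x.1, x.2⟩
      invFun := fun x => (x.left, x.right)
      left_inv := fun _ => rfl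
      right_inv := fun _ => rfl }

/-- The character `w ↦ ∑ a_i mod p` of `W̃`. -/
noncomputable def wsumHom (e p n : ℕ) (hp : p ∣ e) : Wt e n →* Multiplicative (ZMod p) where
  toFun w := Multiplicative.ofAdd (∑ i, ZMod.castHom hp (ZMod p) (w.left i).toAdd)
  map_one' := by simp
  map_mul' w w' := by
    have h : ∀ i, ((w * w').left i).toAdd
        = (w.left i).toAdd + (w'.left (w.right.symm i)).toAdd := fun _ => rfl
    simp only [h, map_add, Finset.sum_add_distrib, ofAdd_add]
    congr 2
    exact Equiv.sum_comp w.right.symm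
      (fun i => ZMod.castHom hp (ZMod p) ((w'.left i).toAdd))

/-- `W = G(e,p,n)`: the subgroup of `W̃` on which `∑ a_i ≡ 0 (mod p)`. -/
noncomputable def Wgrp (e p n : ℕ) (hp : p ∣ e) : Subgroup (Wt e n) :=
  (wsumHom e p n hp).ker

/-- `σ = t_1 ∈ W̃`. -/
def sigmaElt (e n : ℕ) [NeZero n] : Wt e n :=
  SemidirectProduct.inl (fun i => Multiplicative.ofAdd (if i = (0 : Fin n) then (1 : ZMod e) else 0))

/-- membership in the coset `σ^q W`. -/
def inCoset (e p n : ℕ) [NeZero n] (hp : p ∣ e) (q : ℕ) (w : Wt e n) : Prop :=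
  ∃ u ∈ Wgrp e p n hp, w = (sigmaElt e n) ^ q * u

/-- conjugacy under `W`. -/
def IsConjW (e p n : ℕ) (hp : p ∣ e) (w w' : Wt e n) : Prop :=
  ∃ u ∈ Wgrp e p n hp, u * w * u⁻¹ = w'

/-- The `e`-partition recording the conjugacy class of `w ∈ W̃`:
a `k`-cycle of length `l` (a cycle of the underlying permutation whose
accumulated `ZMod e`-color is `k`, fixed points counting as `1`-cycles)
contributes a part `l` to the `k`-th component. -/
noncomputable def classOf (e n : ℕ) [NeZero e] (w : Wt e n) : ZMod e → Multiset ℕ := fun k =>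
  ((w.right.cycleFactorsFinset.val.filter
      (fun c => (∑ i ∈ c.support, (w.left i).toAdd) = k)).map fun c => c.support.card)
    + Multiset.replicate
        ((Finset.univ.filter fun i : Fin n => w.right i = i ∧ (w.left i).toAdd = k).card) 1

/-! ### The standard class representative `w_α(b)` -/

/-- The list of (part, color) pairs of an `e`-partition. -/
noncomputable def partsList (e : ℕ) [NeZero e] (α : ZMod e → Multiset ℕ) : List (ℕ × ZMod e) :=
  (Finset.univ : Finset (ZMod e)).toList.flatMap fun k => (α k).toList.map fun r => (r, k)

/-- the color datum of `w_α(b)`: each cycle carries its color at its first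
point, except the first (exceptional) cycle, which carries `k - b` at its
first point and `b` at its last point. -/
noncomputable def aexc (e : ℕ) [NeZero e] (L : List (ℕ × ZMod e)) (b : ZMod e) :
    (Σ i : Fin L.length, Fin (L.get i).1) → ZMod e := fun x =>
  if (x.1 : ℕ) = 0 then
    (if (x.2 : ℕ) = 0 then (L.get x.1).2 - b else 0)
      + (if (x.2 : ℕ) = (L.get x.1).1 - 1 then b else 0)
  else if (x.2 : ℕ) = 0 then (L.get x.1).2 else 0

/-- The standard representative `w_α(b) ∈ W̃` of the paper, 2.6: a product of
disjoint cycles matching `α`, of the form `t_{i_1}^k z` except for one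
exceptional cycle `t_{i_1}^{k-b} t_{i_m}^{b} z`. -/
noncomputable def wrep (e n : ℕ) [NeZero e] (α : ZMod e → Multiset ℕ) (b : ZMod e) : Wt e n :=
  if hcard : Fintype.card (Σ i : Fin (partsList e α).length, Fin ((partsList e α).get i).1) = n then
    let φ := Fintype.equivFinOfCardEq hcard
    ⟨fun t => Multiplicative.ofAdd (aexc e (partsList e α) b (φ.symm t)),
      φ.symm.trans ((Equiv.sigmaCongrRight fun _ => finRotate _).trans φ)⟩
  else 1

/-! ## The tensor space `V^{⊗n}` -/

/-- Basis index of `V = ⊕_k V_k`, `dim V_k = m k`. -/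
abbrev BIdx (e : ℕ) [NeZero e] (m : ZMod e → ℕ) := Σ k : ZMod e, Fin (m k)

/-- Basis index of `V^{⊗n}`. -/
abbrev TIdx (e n : ℕ) [NeZero e] (m : ZMod e → ℕ) := Fin n → BIdx e m

/-- `ζ` raised to a `ZMod e` exponent. -/
noncomputable def zmpow (e : ℕ) [NeZero e] (ζ : ℂ) (c : ZMod e) : ℂ := ζ ^ c.val

/-- the matrix of `w ∈ W̃` on `V^{⊗n}` (𝔖_n permutes the factors, and
`t_k` multiplies by `ζ^j` if the `k`-th factor lies in `V_j`). -/
noncomputable def rhoMat (e n : ℕ) [NeZero e] (ζ : ℂ) (m : ZMod e → ℕ) (w : Wt e n) :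
    Matrix (TIdx e n m) (TIdx e n m) ℂ := fun b' b =>
  if b' = b ∘ ⇑w.right.symm then ∏ s, ζ ^ (((w.left s).toAdd.val) * (b' s).1.val) else 0

/-- The operator `D` (multiplication by `x_{i_1} ⋯ x_{i_n}`), with the
variables evaluated via `xv`. -/
noncomputable def Dmat (e n : ℕ) [NeZero e] (m : ZMod e → ℕ) (xv : BIdx e m → ℂ) :
    Matrix (TIdx e n m) (TIdx e n m) ℂ :=
  Matrix.diagonal fun b => ∏ s, xv (b s)

/-- `τ` on the basis of `V`: `v_j^{(k)} ↦ v_j^{(k+d)}` (uses `m (k+d) = m k`). -/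
def tauB (e : ℕ) [NeZero e] (d : ℕ) (m : ZMod e → ℕ) (hm : ∀ k, m (k + (d : ZMod e)) = m k) :
    BIdx e m → BIdx e m := fun b => ⟨b.1 + (d : ZMod e), Fin.cast (hm b.1).symm b.2⟩

/-- `g ↦ g^{⊗ n}`: the matrix of `g ∈ End V` acting diagonally on `V^{⊗n}`. -/
noncomputable def tensorPow (e n : ℕ) [NeZero e] (m : ZMod e → ℕ)
    (g : Matrix (BIdx e m) (BIdx e m) ℂ) : Matrix (TIdx e n m) (TIdx e n m) ℂ :=
  Matrix.of fun b' b => ∏ s, g (b' s) (b s)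

/-- the matrix of `τ` on `V`. -/
noncomputable def tauV (e : ℕ) [NeZero e] (d : ℕ) (m : ZMod e → ℕ)
    (hm : ∀ k, m (k + (d : ZMod e)) = m k) : Matrix (BIdx e m) (BIdx e m) ℂ :=
  fun b' b => if b' = tauB e d m hm b then 1 else 0

/-- the matrix of `τ` on `V^{⊗n}`. -/
noncomputable def tauMat (e n : ℕ) [NeZero e] (d : ℕ) (m : ZMod e → ℕ)
    (hm : ∀ k, m (k + (d : ZMod e)) = m k) : Matrix (TIdx e n m) (TIdx e n m) ℂ :=
  tensorPow e n m (tauV e d m hm)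

/-- a member of `G = GL_{m_0} × ⋯ × GL_{m_{e-1}}` (as an endomorphism of V,
invertibility stated separately). -/
def IsBlockDiag (e : ℕ) [NeZero e] (m : ZMod e → ℕ) (g : Matrix (BIdx e m) (BIdx e m) ℂ) : Prop :=
  ∀ b b' : BIdx e m, b.1 ≠ b'.1 → g b b' = 0

/-- a block upper unitriangular matrix (product of root subgroups for the
positive roots of `G`). -/
def IsUpperUni (e : ℕ) [NeZero e] (m : ZMod e → ℕ) (g : Matrix (BIdx e m) (BIdx e m) ℂ) : Prop :=
  (∀ b, g b b = 1) ∧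
    ∀ b b' : BIdx e m, b ≠ b' → ¬(b.1 = b'.1 ∧ b.2.val < b'.2.val) → g b b' = 0

/-! ## Symmetric functions (evaluated form) -/

/-- value of the variable `x_i^{(k)}` under the assignment `xv` (junk `0` out
of range). -/
noncomputable def xval (e : ℕ) [NeZero e] (m : ZMod e → ℕ) (xv : BIdx e m → ℂ)
    (k : ZMod e) (i : ℕ) : ℂ :=
  if h : i < m k then xv ⟨k, ⟨i, h⟩⟩ else 0

/-- `h_j`: the order of the image of `j` in `ℤ/pℤ`. -/
noncomputable def hOrd (p j : ℕ) : ℕ := addOrderOf ((j : ZMod p))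

/-- `j₁ d` where `j₁ = p / h_j`: the number of components of the variable
system `𝒳_j`. -/
noncomputable def Esys (p d j : ℕ) : ℕ := (p / hOrd p j) * d

/-- the variable `X_i^{(k)} = x_i^{(k)} x_i^{(k+jd)} ⋯ x_i^{(k+(h_j-1)jd)}`
of the system `𝒳_j`. -/
noncomputable def Xvar (e : ℕ) [NeZero e] (p d : ℕ) (m : ZMod e → ℕ) (xv : BIdx e m → ℂ)
    (j k i : ℕ) : ℂ :=
  ∏ s ∈ Finset.range (hOrd p j), xval e m xv (((k + s * j * d : ℕ) : ZMod e)) i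

/-- number of variables in the `k`-th component of any of the systems `𝒳_j`. -/
noncomputable def mmX (e : ℕ) [NeZero e] (m : ZMod e → ℕ) : ℕ → ℕ := fun k => m ((k : ℕ) : ZMod e)

/-- The variables of the system `𝒳_j`, as a doubly indexed family. -/
noncomputable def vvX (e : ℕ) [NeZero e] (p d : ℕ) (m : ZMod e → ℕ) (xv : BIdx e m → ℂ)
    (j : ℕ) : ℕ → ℕ → ℂ := fun k i => Xvar e p d m xv j k i

/-- complete homogeneous symmetric polynomial `h_r` in `N` variables. -/
noncomputable def hcomp (N r : ℕ) (v : ℕ → ℂ) : ℂ :=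
  ∑ c ∈ Finset.Nat.antidiagonalTuple N r, ∏ i : Fin N, v i ^ c i

/-- the parts of a partition in decreasing order (`0` beyond the length). -/
noncomputable def lamOf (μ : Multiset ℕ) (i : ℕ) : ℕ := ((μ.sort (· ≤ ·)).reverse).getD i 0

/-- Schur polynomial in `N` variables (Jacobi–Trudi). -/
noncomputable def schurFin (N : ℕ) (μ : Multiset ℕ) (v : ℕ → ℂ) : ℂ :=
  Matrix.det (Matrix.of fun i j : Fin N =>
    if h : (0 : ℤ) ≤ (lamOf μ i + j : ℤ) - i then hcomp N ((lamOf μ i + j : ℤ) - i).toNat v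
    else 0)

/-- monomial symmetric polynomial in `N` variables. -/
noncomputable def monoFin (N : ℕ) (μ : Multiset ℕ) (v : ℕ → ℂ) : ℂ :=
  ∑ c ∈ (Finset.Nat.antidiagonalTuple N μ.sum).filter
      (fun c => ((List.ofFn c : List ℕ) : Multiset ℕ).filter (fun x => 0 < x) = μ),
    ∏ i : Fin N, v i ^ c i

/-! ### generic families for a variable system with `E` components -/

/-- `p_r^{(i)} = ∑_{k<E} u^{ik} p_r(x^{(k)})` (formula (2.2.2)/(2.4.2), with
`u` a primitive `E`-th root of unity), for the system of variables
`vv k i` (`k < E`, `i < mm k`); `p_0^{(i)} = 1`. -/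
noncomputable def pGenSys (u : ℂ) (E : ℕ) (mm : ℕ → ℕ) (vv : ℕ → ℕ → ℂ) (i r : ℕ) : ℂ :=
  if r = 0 then 1 else ∑ k ∈ Finset.range E, u ^ (i * k) * ∑ s ∈ Finset.range (mm k), vv k s ^ r

/-- the power sum `p_γ` of an `E`-tuple of partitions (2.2.1). -/
noncomputable def pAlphaSys (u : ℂ) (E : ℕ) (mm : ℕ → ℕ) (vv : ℕ → ℕ → ℂ)
    (γ : ℕ → Multiset ℕ) : ℂ :=
  ∏ k ∈ Finset.range E, ((γ k).map fun r => pGenSys u E mm vv k r).prod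

/-- the Schur function `s_γ` of an `E`-tuple of partitions. -/
noncomputable def sAlphaSys (E : ℕ) (mm : ℕ → ℕ) (vv : ℕ → ℕ → ℂ) (γ : ℕ → Multiset ℕ) : ℂ :=
  ∏ k ∈ Finset.range E, schurFin (mm k) (γ k) (vv k)

/-- the monomial symmetric function `m_γ` of an `E`-tuple of partitions. -/
noncomputable def mAlphaSys (E : ℕ) (mm : ℕ → ℕ) (vv : ℕ → ℕ → ℂ) (γ : ℕ → Multiset ℕ) : ℂ :=
  ∏ k ∈ Finset.range E, monoFin (mm k) (γ k) (vv k)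

/-- the function `q_{r,±}^{(k)}(x;t)` of [S], (3.1.1). -/
noncomputable def qGenSys (t : ℂ) (E : ℕ) (mm : ℕ → ℕ) (vv : ℕ → ℕ → ℂ)
    (sgn : Bool) (k r : ℕ) : ℂ :=
  if r = 0 then 1 else
    let k' := if sgn then (k + 1) % E else (k + E - 1) % E
    ∑ i ∈ Finset.range (mm k),
      vv k i ^ ((r : ℤ) + (mm k : ℤ) - 1 - (mm k' : ℤ)) *
        (∏ jj ∈ Finset.range (mm k'), (vv k i - t * vv k' jj)) /
        ∏ jj ∈ (Finset.range (mm k)).erase i, (vv k i - vv k jj)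

/-- the function `q_{γ,±}(x;t)` of [S], (3.1.2). -/
noncomputable def qAlphaSys (t : ℂ) (E : ℕ) (mm : ℕ → ℕ) (vv : ℕ → ℕ → ℂ)
    (sgn : Bool) (γ : ℕ → Multiset ℕ) : ℂ :=
  ∏ k ∈ Finset.range E, ((γ k).map fun r => qGenSys t E mm vv sgn k r).prod

/-- `z_β = ∏ i^{n_i} n_i!` for a partition `β = (1^{n_1} 2^{n_2} ⋯)`. -/
noncomputable def zPart (μ : Multiset ℕ) : ℂ :=
  ∏ i ∈ μ.toFinset, (i : ℂ) ^ (μ.count i) * (Nat.factorial (μ.count i) : ℂ)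

/-- `z_γ(t) = z_γ ∏_{k,j} (1 - u^k t^{γ_j^{(k)}})⁻¹` for an `E`-tuple of
partitions `γ` (`u` the `E`-th root of unity), cf. (3.1.3). -/
noncomputable def zClassSys (u t : ℂ) (E : ℕ) (γ : ℕ → Multiset ℕ) : ℂ :=
  ((E : ℂ) ^ (∑ k ∈ Finset.range E, (γ k).card)) * (∏ k ∈ Finset.range E, zPart (γ k)) *
    (∏ k ∈ Finset.range E, ((γ k).map fun r => (1 - u ^ k * t ^ r)).prod)⁻¹

/-! ### the `j`-th pieces attached to an e-partition -/

/-- the truncation `α{j} = (α^{(0)},…,α^{(j₁d-1)})` (used when `c_{α,p} ∣ j`). -/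
noncomputable def braceF (e : ℕ) [NeZero e] (p d : ℕ) (j : ℕ) (α : ZMod e → Multiset ℕ) :
    ℕ → Multiset ℕ :=
  fun k => if k < Esys p d j then α ((k : ℕ) : ZMod e) else 0

/-- the `j₁d`-partition `α[j]` of `n/h` (condition (2.6.1)): component `k/h`
has parts `α_i^{(k)}/h`. -/
noncomputable def bracketF (e : ℕ) [NeZero e] (p d : ℕ) (j : ℕ) (α : ZMod e → Multiset ℕ) :
    ℕ → Multiset ℕ :=
  fun k' => if k' < Esys p d j then (α (((hOrd p j * k' : ℕ) : ZMod e))).map (fun r => r / hOrd p j)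
  else 0

/-- condition (2.6.1): `h_j` divides all parts `α_i^{(k)}`, and `h_j ∣ k`
whenever `α^{(k)} ≠ ∅`. -/
def Cond261 (e : ℕ) [NeZero e] (p j : ℕ) (α : ZMod e → Multiset ℕ) : Prop :=
  (∀ k, ∀ r ∈ α k, hOrd p j ∣ r) ∧ ∀ k : ZMod e, α k ≠ 0 → hOrd p j ∣ k.val

/-- `s_{α{j}}(𝒳_j)`. -/
noncomputable def schurBrace (e : ℕ) [NeZero e] (p d : ℕ) (m : ZMod e → ℕ) (xv : BIdx e m → ℂ)
    (j : ℕ) (α : ZMod e → Multiset ℕ) : ℂ :=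
  sAlphaSys (Esys p d j) (mmX e m) (vvX e p d m xv j) (braceF e p d j α)

/-- `p_{α[j]}(𝒳_j)` (2.6; the root of unity for the system `𝒳_j` is `ζ^h`). -/
noncomputable def pBracket (e : ℕ) [NeZero e] (p d : ℕ) (ζ : ℂ) (m : ZMod e → ℕ)
    (xv : BIdx e m → ℂ) (j : ℕ) (α : ZMod e → Multiset ℕ) : ℂ :=
  pAlphaSys (ζ ^ hOrd p j) (Esys p d j) (mmX e m) (vvX e p d m xv j) (bracketF e p d j α)

/-- `l(α[j])`. -/
noncomputable def lenBracket (e : ℕ) [NeZero e] (p d : ℕ) (j : ℕ)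
    (α : ZMod e → Multiset ℕ) : ℕ :=
  ∑ k ∈ Finset.range (Esys p d j), (bracketF e p d j α k).card

/-! ### Schur functions and power sums for `σ^q W` (2.10) -/

/-- the `j`-th component `s^j_{α,φ}` of the Schur function `𝐬_{α,φ}` for
`σ^q W` (2.10.1); the character `φ = φ_r` of `Γ_α = ⟨τ^c⟩ ≅ ℤ/(p/c)ℤ` is
encoded by `r`, via `φ_r(τ^j) = ζ^{drj}` for `c ∣ j`. -/
noncomputable def sTuple (e : ℕ) [NeZero e] (p d q : ℕ) (ζ : ℂ) (m : ZMod e → ℕ)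
    (xv : BIdx e m → ℂ) (α : ZMod e → Multiset ℕ) (r : ℕ) (j : ℕ) : ℂ :=
  if csize e d α ∣ j then
    ζ ^ (d * r * j) *
      ∑ i ∈ Finset.range (csize e d α),
        ζ ^ (q * i * d) * schurBrace e p d m xv j ((theta e d)^[i] α)
  else 0

/-- the `j`-th component `p^j_{β,b}` of the power sum `𝐩_{β,b}` for `σ^q W`
(2.10.2). -/
noncomputable def pTuple (e : ℕ) [NeZero e] (p d : ℕ) (ζ : ℂ) (m : ZMod e → ℕ)
    (xv : BIdx e m → ℂ) (β : ZMod e → Multiset ℕ) (b : ZMod e) (j : ℕ) : ℂ :=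
  if Cond261 e p j β then
    (hOrd p j : ℂ) ^ (lenBracket e p d j β) *
      zmpow e ζ (-(((Delta e β : ZMod e) + b) * ((j * d : ℕ) : ZMod e))) *
      pBracket e p d ζ m xv j β
  else 0

/-! ## The model for (extensions of) the irreducible characters of `W` -/

/-- trace of `f` on a subspace (junk `0` if not invariant). -/
noncomputable def traceOn {V : Type*} [AddCommGroup V] [Module ℂ V]
    (S : Submodule ℂ V) (f : V →ₗ[ℂ] V) : ℂ :=
  if h : ∀ v ∈ S, f v ∈ S then LinearMap.trace ℂ S (f.restrict h) else 0

/-- the scalar by which the torus element `diag dv ∈ G` acts on a highest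
weight vector of weight `α`. -/
noncomputable def weightOf (e : ℕ) [NeZero e] (m : ZMod e → ℕ) (α : ZMod e → Multiset ℕ)
    (dv : BIdx e m → ℂ) : ℂ :=
  ∏ b : BIdx e m, dv b ^ (lamOf (α b.1) b.2.val)

/-- the space of highest weight vectors of weight `α` in `V^{⊗n}`: the model
for the irreducible `W̃`-module `Z_α` (1.3.1, 1.4). -/
noncomputable def hwSubmodule (e n : ℕ) [NeZero e] (m : ZMod e → ℕ)
    (α : ZMod e → Multiset ℕ) : Submodule ℂ (TIdx e n m → ℂ) :=
  (⨅ g ∈ {g | IsUpperUni e m g},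
      Module.End.eigenspace (Matrix.mulVecLin (tensorPow e n m g)) 1) ⊓
    ⨅ dv : BIdx e m → ℂ,
      Module.End.eigenspace (Matrix.mulVecLin (tensorPow e n m (Matrix.diagonal dv)))
        (weightOf e m α dv)

/-- the model for the irreducible `W`-module `Z_{α,φ_r}`: the
`φ_r(τ^c)`-eigenspace of `τ^c` on `Z_α`, where `c = c_{α,p}` and
`φ_r(τ^c) = ζ^{cdr}`. -/
noncomputable def ZSub (e n : ℕ) [NeZero e] (d : ℕ) (m : ZMod e → ℕ)
    (hm : ∀ k, m (k + (d : ZMod e)) = m k) (ζ : ℂ) (α : ZMod e → Multiset ℕ) (r : ℕ) :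
    Submodule ℂ (TIdx e n m → ℂ) :=
  hwSubmodule e n m α ⊓
    Module.End.eigenspace (Matrix.mulVecLin ((tauMat e n d m hm) ^ (csize e d α)))
      (ζ ^ (csize e d α * d * r))

/-- The model for the irreducible character `χ^{α,φ_r}` of `W` and for its
chosen extension `χ̃^{α,φ_r}` to `⟨σ^q⟩ ⋉ W`: the trace of `w` on the model
`Z_{α,φ_r} ⊆ V^{⊗n}`. -/
noncomputable def charExt (e n : ℕ) [NeZero e] (d : ℕ) (m : ZMod e → ℕ)
    (hm : ∀ k, m (k + (d : ZMod e)) = m k) (ζ : ℂ) (α : ZMod e → Multiset ℕ) (r : ℕ)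
    (w : Wt e n) : ℂ :=
  traceOn (ZSub e n d m hm ζ α r) (Matrix.mulVecLin (rhoMat e n ζ m w))

/-! ## symbols, a-function, similarity; the reflection representation -/

/-- the multiset of entries of the symbol `Λ(α) = α + Λ⁰` of type `(r,0)`. -/
noncomputable def entriesSym (e : ℕ) [NeZero e] (m : ZMod e → ℕ) (rsym : ℕ)
    (α : ZMod e → Multiset ℕ) : Multiset ℕ :=
  (Finset.univ : Finset (BIdx e m)).val.map fun b =>
    lamOf (α b.1) b.2.val + rsym * (m b.1 - 1 - b.2.val)

noncomputable def pairMinSum (M : Multiset ℕ) : ℕ :=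
  (M.bind fun a => M.map fun b => min a b).sum

/-- the `a`-function (3.5.2) on symbols of type `(rsym, 0)`. -/
noncomputable def aVal (e : ℕ) [NeZero e] (m : ZMod e → ℕ) (rsym : ℕ)
    (α : ZMod e → Multiset ℕ) : ℕ :=
  pairMinSum (entriesSym e m rsym α) - pairMinSum (entriesSym e m rsym (fun _ => 0))

/-- similarity of symbols: equality of entries with multiplicities. -/
def SimSym (e : ℕ) [NeZero e] (m : ZMod e → ℕ) (rsym : ℕ) (α β : ZMod e → Multiset ℕ) : Prop :=
  entriesSym e m rsym α = entriesSym e m rsym β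

/-- the reflection representation `M = ℂ^n` of `W̃` (`w(e_i) = ζ^{a_i} e_{x(i)}`). -/
noncomputable def refMat (e n : ℕ) [NeZero e] (ζ : ℂ) (w : Wt e n) :
    Matrix (Fin n) (Fin n) ℂ :=
  fun i' i => if i' = w.right i then zmpow e ζ (w.left i').toAdd else 0

/-- The functional `R_q(f)` of (4.2.1), for a function `f` on the coset `σ^q W`. -/
noncomputable def Rq (e p d n : ℕ) [NeZero e] [NeZero n] (hp : p ∣ e) (ζ t : ℂ) (q : ℕ)
    (f : Wt e n → ℂ) : ℂ :=
  (ζ ^ (q * d) * t ^ (d * n) - 1) * (∏ i ∈ Finset.Icc 1 (n - 1), (t ^ (e * i) - 1)) *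
    (Nat.card (Wgrp e p n hp) : ℂ)⁻¹ *
    ∑ w ∈ Finset.univ.filter (fun w => inCoset e p n hp q w),
      (refMat e n ζ w).det * f w / (t • (1 : Matrix (Fin n) (Fin n) ℂ) - refMat e n ζ w).det

/-- `N^*`: the number of reflections in `W`. -/
noncomputable def Nstar (e p n : ℕ) [NeZero e] (hp : p ∣ e) (ζ : ℂ) : ℕ :=
  Nat.card {w : Wt e n // w ∈ Wgrp e p n hp ∧ w ≠ 1 ∧ (refMat e n ζ w - 1).rank = 1}

end GreenII

namespace GreenII
lemma zm_add {e : ℕ} [NeZero e] {ζ : ℂ} (hζ : IsPrimitiveRoot ζ e) (a b : ZMod e) :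
    zmpow e ζ (a + b) = zmpow e ζ a * zmpow e ζ b := by
  unfold zmpow
  rw [← pow_add, ZMod.val_add, ← pow_mod_orderOf ζ (a.val + b.val), ← hζ.eq_orderOf]

lemma zm_nat {e : ℕ} [NeZero e] {ζ : ℂ} (hζ : IsPrimitiveRoot ζ e) (k : ℕ) :
    zmpow e ζ (k : ZMod e) = ζ ^ k := by
  unfold zmpow
  rw [ZMod.val_natCast, ← pow_mod_orderOf ζ k, ← hζ.eq_orderOf]

lemma zm_zero {e : ℕ} [NeZero e] (ζ : ℂ) : zmpow e ζ 0 = 1 := by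
  simp [zmpow]

lemma zm_mul {e : ℕ} [NeZero e] {ζ : ℂ} (hζ : IsPrimitiveRoot ζ e) (a b : ZMod e) :
    zmpow e ζ (a * b) = ζ ^ (a.val * b.val) := by
  rw [← zm_nat hζ]; simp

lemma zm_sum {e : ℕ} [NeZero e] {ζ : ℂ} (hζ : IsPrimitiveRoot ζ e) {ι : Type*} (s : Finset ι)
    (f : ι → ZMod e) : zmpow e ζ (∑ i ∈ s, f i) = ∏ i ∈ s, zmpow e ζ (f i) := by
  classical
  induction s using Finset.induction_on with
  | empty => simp [zm_zero]
  | insert a s ha ih => rw [Finset.sum_insert ha, Finset.prod_insert ha, zm_add hζ, ih]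

lemma zm_eq_one {e : ℕ} [NeZero e] {ζ : ℂ} (hζ : IsPrimitiveRoot ζ e) (a : ZMod e) :
    zmpow e ζ a = 1 ↔ a = 0 := by
  unfold zmpow
  rw [hζ.pow_eq_one_iff_dvd, ← ZMod.natCast_eq_zero_iff, ZMod.natCast_zmod_val]

lemma bidx_ext {e : ℕ} [NeZero e] {m : ZMod e → ℕ} {b c : BIdx e m} (h1 : b.1 = c.1)
    (h2 : b.2.val = c.2.val) : b = c := by
  obtain ⟨k, i⟩ := b
  obtain ⟨l, i'⟩ := c
  simp only at h1
  subst h1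
  simp only at h2
  congr 1
  exact Fin.ext h2

lemma tau_iter_fst {e : ℕ} [NeZero e] (d : ℕ) (m : ZMod e → ℕ)
    (hm : ∀ k, m (k + (d : ZMod e)) = m k) (N : ℕ) (c : BIdx e m) :
    ((tauB e d m hm)^[N] c).1 = c.1 + ((N * d : ℕ) : ZMod e) := by
  induction N with
  | zero => simp
  | succ N ih =>
    rw [Function.iterate_succ_apply']
    change ((tauB e d m hm)^[N] c).1 + _ = _
    rw [ih]; push_cast; ring

lemma tau_iter_snd {e : ℕ} [NeZero e] (d : ℕ) (m : ZMod e → ℕ)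
    (hm : ∀ k, m (k + (d : ZMod e)) = m k) (N : ℕ) (c : BIdx e m) :
    ((tauB e d m hm)^[N] c).2.val = c.2.val := by
  induction N with
  | zero => simp
  | succ N ih =>
    rw [Function.iterate_succ_apply']
    exact ih

lemma tau_iter_fix {e : ℕ} [NeZero e] (d : ℕ) (m : ZMod e → ℕ)
    (hm : ∀ k, m (k + (d : ZMod e)) = m k) (N : ℕ) (c : BIdx e m) :
    (tauB e d m hm)^[N] c = c ↔ ((N * d : ℕ) : ZMod e) = 0 := by
  constructor
  · intro h
    have := tau_iter_fst d m hm N c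
    rw [h] at this
    simpa using this
  · intro h
    refine bidx_ext ?_ (tau_iter_snd d m hm N c)
    rw [tau_iter_fst, h, add_zero]

lemma xv_eq_xval {e : ℕ} [NeZero e] (m : ZMod e → ℕ) (xv : BIdx e m → ℂ) (c : BIdx e m) :
    xv c = xval e m xv c.1 c.2.val := by
  unfold xval
  rw [dif_pos c.2.2]

lemma tauMat_pow {e n : ℕ} [NeZero e] (d : ℕ) (m : ZMod e → ℕ)
    (hm : ∀ k, m (k + (d : ZMod e)) = m k) (j : ℕ) (b' b : TIdx e n m) :
    ((tauMat e n d m hm) ^ j) b' b = if b' = (tauB e d m hm)^[j] ∘ b then 1 else 0 := by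
  have h1 : ∀ b' b, tauMat e n d m hm b' b = if b' = (tauB e d m hm) ∘ b then 1 else 0 := by
    intro b' b
    simp only [tauMat, tensorPow, tauV, Matrix.of_apply]
    rw [Finset.prod_ite_zero]
    simp [funext_iff]
  induction j generalizing b' with
  | zero => simp [Matrix.one_apply]
  | succ j ih =>
    rw [pow_succ', Matrix.mul_apply]
    simp only [h1, ih]
    rw [Finset.sum_eq_single ((tauB e d m hm)^[j] ∘ b)]
    · rw [Function.iterate_succ', Function.comp_assoc, if_pos rfl, mul_one]
    · intro c _ hc
      rw [if_neg hc, mul_zero]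
    · simp

/-- The trace as a sum over colourings. -/
noncomputable def FF {e : ℕ} [NeZero e] (d j : ℕ) (ζ : ℂ) (m : ZMod e → ℕ)
    (hm : ∀ k, m (k + (d : ZMod e)) = m k) (xv : BIdx e m → ℂ)
    {ι : Type} [Fintype ι] [DecidableEq ι] (x : Equiv.Perm ι) (a : ι → ZMod e) : ℂ :=
  ∑ c : ι → BIdx e m, if (∀ s, c (x s) = (tauB e d m hm)^[j] (c s)) then
    ∏ s, (xv (c s) * zmpow e ζ (a s * ((c s).1 - ((j * d : ℕ) : ZMod e)))) else 0

lemma trace_eq {e n : ℕ} [NeZero e] (d j : ℕ) {ζ : ℂ} (hζ : IsPrimitiveRoot ζ e) (m : ZMod e → ℕ)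
    (hm : ∀ k, m (k + (d : ZMod e)) = m k) (xv : BIdx e m → ℂ) (w : Wt e n) :
    Matrix.trace (Dmat e n m xv * (tauMat e n d m hm) ^ j * rhoMat e n ζ m w) =
      FF d j ζ m hm xv w.right (fun s => (w.left s).toAdd) := by
  unfold FF Matrix.trace
  refine Finset.sum_congr rfl fun c _ => ?_
  rw [Matrix.diag_apply, mul_assoc, Dmat, Matrix.diagonal_mul, Matrix.mul_apply]
  rw [Finset.sum_eq_single (c ∘ w.right.symm)]
  · rw [tauMat_pow]
    have hiff : (c = (tauB e d m hm)^[j] ∘ (c ∘ w.right.symm)) ↔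
        ∀ s, c (w.right s) = (tauB e d m hm)^[j] (c s) := by
      constructor
      · intro h s
        conv_lhs => rw [h]
        simp
      · intro h
        funext s
        have := h (w.right.symm s)
        simpa using this
    by_cases h : ∀ s, c (w.right s) = (tauB e d m hm)^[j] (c s)
    · rw [if_pos (hiff.2 h), if_pos h, rhoMat, if_pos rfl, one_mul, Finset.prod_mul_distrib]
      congr 1
      refine Finset.prod_congr rfl fun s _ => ?_
      rw [← zm_mul hζ]
      have h2 := h (w.right.symm s)
      rw [Equiv.apply_symm_apply] at h2
      rw [h2, tau_iter_fst]
      simp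
    · rw [if_neg (fun h' => h (hiff.1 h')), if_neg h]; simp
  · intro b _ hb
    rw [rhoMat, if_neg hb, mul_zero]
  · simp

lemma FF_reindex {e : ℕ} [NeZero e] (d j : ℕ) (ζ : ℂ) (m : ZMod e → ℕ)
    (hm : ∀ k, m (k + (d : ZMod e)) = m k) (xv : BIdx e m → ℂ)
    {ι κ : Type} [Fintype ι] [DecidableEq ι] [Fintype κ] [DecidableEq κ]
    (φ : ι ≃ κ) (x : Equiv.Perm ι) (a : ι → ZMod e) :
    FF d j ζ m hm xv ((φ.symm.trans (x.trans φ)) : Equiv.Perm κ) (fun t => a (φ.symm t)) =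
      FF d j ζ m hm xv x a := by
  unfold FF
  refine Fintype.sum_equiv (Equiv.arrowCongr φ (Equiv.refl _)).symm _ _ fun c => ?_
  refine if_congr ?_ ?_ rfl
  · constructor
    · intro h s
      have := h (φ s)
      simpa using this
    · intro h s
      have := h (φ.symm s)
      simpa using this
  · refine Fintype.prod_equiv φ.symm _ _ fun s => ?_
    simp

lemma FF_conj {e n : ℕ} [NeZero e] (p d j : ℕ) (hp : p ∣ e) (hd : d = e / p)
    {ζ : ℂ} (hζ : IsPrimitiveRoot ζ e) (m : ZMod e → ℕ)
    (hm : ∀ k, m (k + (d : ZMod e)) = m k) (xv : BIdx e m → ℂ) (w w' : Wt e n)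
    (h : IsConjW e p n hp w w') :
    FF d j ζ m hm xv w'.right (fun s => (w'.left s).toAdd) =
      FF d j ζ m hm xv w.right (fun s => (w.left s).toAdd) := by
  obtain ⟨u, hu, rfl⟩ := h
  have hed : p * d = e := by rw [hd]; exact Nat.mul_div_cancel' hp
  have hsum : (∑ s, (u.left s).toAdd) * ((j * d : ℕ) : ZMod e) = 0 := by
    have h1 : (∑ i, ZMod.castHom hp (ZMod p) (u.left i).toAdd) = 0 := by
      have := hu
      rw [Wgrp, MonoidHom.mem_ker] at this
      exact this
    rw [← map_sum] at h1
    generalize (∑ s, (u.left s).toAdd) = A at *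
    rw [← ZMod.natCast_zmod_val A, map_natCast, ZMod.natCast_eq_zero_iff] at h1
    rw [← ZMod.natCast_zmod_val A, ← Nat.cast_mul, ZMod.natCast_eq_zero_iff]
    obtain ⟨q, hq⟩ := h1
    rw [hq]
    exact ⟨q * j, by rw [← hed]; ring⟩
  rw [← FF_reindex d j ζ m hm xv u.right w.right]
  have hr : (u * w * u⁻¹).right = u.right.symm.trans (w.right.trans u.right) := rfl
  have hl : ∀ s, ((u * w * u⁻¹).left s).toAdd = (u.left s).toAdd + (w.left (u.right.symm s)).toAdd
      - (u.left ((u * w * u⁻¹).right.symm s)).toAdd := by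
    intro s
    have h1 : ((u * w * u⁻¹).left s).toAdd = (u.left s).toAdd + (w.left (u.right.symm s)).toAdd
      + (u⁻¹.left ((u * w).right.symm s)).toAdd := rfl
    have h2 : ∀ t, (u⁻¹.left t).toAdd = - (u.left (u.right t)).toAdd := by
      intro t; rfl
    rw [h1, h2, sub_eq_add_neg]
    rfl
  rw [← hr]
  unfold FF
  refine Finset.sum_congr rfl fun c _ => ?_
  by_cases hc : ∀ s, c ((u * w * u⁻¹).right s) = (tauB e d m hm)^[j] (c s)
  · rw [if_pos hc, if_pos hc, Finset.prod_mul_distrib, Finset.prod_mul_distrib]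
    congr 1
    rw [← zm_sum hζ, ← zm_sum hζ]
    congr 1
    simp only [hl]
    generalize (u * w * u⁻¹).right = X at *
    have h3 : ∑ s, (u.left (X.symm s)).toAdd * ((c s).1 - ((j * d : ℕ) : ZMod e)) =
        ∑ s, (u.left s).toAdd * (c s).1 := by
      refine Fintype.sum_equiv X.symm _ _ fun s => ?_
      have := hc (X.symm s)
      rw [Equiv.apply_symm_apply] at this
      rw [this, tau_iter_fst]; simp
    simp only [add_mul, sub_mul, Finset.sum_add_distrib, Finset.sum_sub_distrib]
    simp only [mul_sub, Finset.sum_sub_distrib] at h3 ⊢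
    rw [h3, ← Finset.sum_mul, hsum]
    ring
  · rw [if_neg hc, if_neg hc]

lemma FF_sigma {e : ℕ} [NeZero e] (d j : ℕ) (ζ : ℂ) (m : ZMod e → ℕ)
    (hm : ∀ k, m (k + (d : ZMod e)) = m k) (xv : BIdx e m → ℂ)
    {N : ℕ} (r : Fin N → ℕ) (x : ∀ i, Equiv.Perm (Fin (r i)))
    (a : (Σ i : Fin N, Fin (r i)) → ZMod e) :
    FF d j ζ m hm xv (Equiv.sigmaCongrRight x) a =
      ∏ i, FF d j ζ m hm xv (x i) (fun s => a ⟨i, s⟩) := by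
  unfold FF
  rw [Finset.prod_univ_sum, Fintype.piFinset_univ]
  refine Fintype.sum_equiv (Equiv.piCurry (fun _ _ => BIdx e m)) _ _ fun c => ?_
  by_cases h : ∀ s, c (Equiv.sigmaCongrRight x s) = (tauB e d m hm)^[j] (c s)
  · rw [if_pos h, Fintype.prod_sigma]
    refine Finset.prod_congr rfl fun i _ => ?_
    rw [if_pos]
    · rfl
    · intro s
      exact h ⟨i, s⟩
  · rw [if_neg h]
    push Not at h
    obtain ⟨⟨i, s⟩, h⟩ := h
    symm
    refine Finset.prod_eq_zero (Finset.mem_univ i) ?_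
    rw [if_neg]
    intro h'
    exact h (h' s)

lemma FF_cycle {e : ℕ} [NeZero e] (d j : ℕ) (ζ : ℂ) (m : ZMod e → ℕ)
    (hm : ∀ k, m (k + (d : ZMod e)) = m k) (xv : BIdx e m → ℂ)
    (r : ℕ) (hr : 0 < r) (a : Fin r → ZMod e) :
    FF d j ζ m hm xv (finRotate r) a =
      if ((r * j * d : ℕ) : ZMod e) = 0 then
        ∑ c : BIdx e m, ∏ s : Fin r, (xval e m xv (c.1 + ((s * (j * d) : ℕ) : ZMod e)) c.2.val *
          zmpow e ζ (a s * (c.1 + ((s * (j * d) : ℕ) : ZMod e) - ((j * d : ℕ) : ZMod e))))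
      else 0 := by
  obtain ⟨q, rfl⟩ : ∃ q, r = q + 1 := ⟨r - 1, by omega⟩
  unfold FF
  have key : ∀ c : Fin (q+1) → BIdx e m, (∀ s, c (finRotate (q+1) s) = (tauB e d m hm)^[j] (c s)) →
      ∀ s : Fin (q+1), c s = (tauB e d m hm)^[j * s] (c 0) := by
    intro c hc s
    induction s using Fin.induction with
    | zero => simp
    | succ i ih =>
      have := hc i.castSucc
      rw [finRotate_apply, Fin.coeSucc_eq_succ, ih, ← Function.iterate_add_apply] at this
      rw [this]
      congr 1
      simp only [Fin.val_castSucc, Fin.val_succ]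
      ring
  split_ifs with h0
  · refine Eq.trans (b := ∑ c ∈ Finset.univ.filter (fun c : Fin (q+1) → BIdx e m =>
        ∀ s, c (finRotate (q+1) s) = (tauB e d m hm)^[j] (c s)),
        ∏ s, xv (c s) * zmpow e ζ (a s * ((c s).1 - ((j * d : ℕ) : ZMod e)))) ?_ ?_
    · rw [Finset.sum_filter]
      refine Finset.sum_congr rfl fun c _ => ?_
      congr
    refine Finset.sum_nbij' (fun c => c 0) (fun c0 s => (tauB e d m hm)^[j * s] c0) ?_ ?_ ?_ ?_ ?_
    · simp
    · intro c0 _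
      simp only [Finset.mem_filter, Finset.mem_univ, true_and]
      intro s
      rw [finRotate_apply, ← Function.iterate_add_apply]
      induction s using Fin.lastCases with
      | last =>
        rw [Fin.last_add_one]
        simp only [Fin.val_zero, mul_zero, Function.iterate_zero, id, Fin.val_last]
        symm
        rw [tau_iter_fix, ← h0]
        congr 1; ring
      | cast i =>
        rw [Fin.coeSucc_eq_succ]
        simp only [Fin.val_castSucc, Fin.val_succ]
        congr 1
        ring
    · intro c hc
      simp only [Finset.mem_filter, Finset.mem_univ, true_and] at hc
      funext s
      exact (key c hc s).symm
    · intro c _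
      simp
    · intro c hc
      simp only [Finset.mem_filter, Finset.mem_univ, true_and] at hc
      refine Finset.prod_congr rfl fun s _ => ?_
      rw [key c hc s, xv_eq_xval m xv, tau_iter_snd, tau_iter_fst]
      have : j * (s:ℕ) * d = s * (j * d) := by ring
      rw [this]
  · refine Finset.sum_eq_zero fun c _ => ?_
    rw [if_neg]
    intro hc
    apply h0
    have h1 := hc (Fin.last q)
    rw [finRotate_apply, Fin.last_add_one, key c hc (Fin.last q),
      ← Function.iterate_add_apply] at h1
    have h2 := (tau_iter_fix d m hm _ (c 0)).1 h1.symm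
    rw [← h2]
    congr 1
    simp only [Fin.val_last]
    ring
end GreenII
namespace GreenII

lemma hOrd_dvd {e p d j : ℕ} (he : p * d = e) (hd : 0 < d) (N : ℕ) :
    ((N * j * d : ℕ) : ZMod e) = 0 ↔ hOrd p j ∣ N := by
  rw [hOrd, addOrderOf_dvd_iff_nsmul_eq_zero, ZMod.natCast_eq_zero_iff, ← he,
    Nat.mul_dvd_mul_iff_right hd, ← ZMod.natCast_eq_zero_iff]
  simp

lemma hOrd_pos {p j : ℕ} (hp : 0 < p) : 0 < hOrd p j := by
  have : NeZero p := ⟨hp.ne'⟩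
  exact addOrderOf_pos _

lemma hOrd_dvd_p {p : ℕ} (j : ℕ) : hOrd p j ∣ p := by
  rw [hOrd, addOrderOf_dvd_iff_nsmul_eq_zero]
  simp

lemma Esys_mul {e p d j : ℕ} (he : p * d = e) : Esys p d j * hOrd p j = e := by
  unfold Esys
  rw [mul_right_comm, Nat.div_mul_cancel (hOrd_dvd_p j), he]

/-- a multiple of `j d` equals `j₁ d`. -/
lemma Esys_bezout {e p d j : ℕ} (he : p * d = e) (hp : 0 < p) :
    ∃ y : ℤ, ((Esys p d j : ℕ) : ZMod e) = (y : ZMod e) * ((j * d : ℕ) : ZMod e) := by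
  refine ⟨Nat.gcdB p j, ?_⟩
  have h1 : p / hOrd p j = p.gcd j := by
    rw [hOrd, ZMod.addOrderOf_coe _ hp.ne', Nat.div_div_self (Nat.gcd_dvd_left p j) hp.ne']
  have h2 := Nat.gcd_eq_gcd_ab p j
  unfold Esys
  rw [h1]
  have h3 : (((p.gcd j * d : ℕ) : ℤ) : ZMod e) =
      (((p * d : ℕ) * Nat.gcdA p j + Nat.gcdB p j * (j * d : ℕ) : ℤ) : ZMod e) := by
    congr 1
    push_cast
    rw [h2]
    ring
  rw [he] at h3
  push_cast at h3 ⊢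
  rw [h3]
  simp

noncomputable def Xz {e : ℕ} [NeZero e] (p d j : ℕ) (m : ZMod e → ℕ) (xv : BIdx e m → ℂ)
    (k : ZMod e) (i : ℕ) : ℂ :=
  ∏ s ∈ Finset.range (hOrd p j), xval e m xv (k + ((s * (j * d) : ℕ) : ZMod e)) i

lemma Xvar_eq {e : ℕ} [NeZero e] (p d j : ℕ) (m : ZMod e → ℕ) (xv : BIdx e m → ℂ)
    (k i : ℕ) : Xvar e p d m xv j k i = Xz p d j m xv (k : ZMod e) i := by
  unfold Xvar Xz
  refine Finset.prod_congr rfl fun s _ => ?_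
  congr 1
  push_cast
  ring

lemma Xz_periodic {e p d j : ℕ} [NeZero e] (he : p * d = e) (hd : 0 < d) (hp : 0 < p)
    (m : ZMod e → ℕ) (xv : BIdx e m → ℂ) (k : ZMod e) (i : ℕ) :
    Xz p d j m xv (k + ((j * d : ℕ) : ZMod e)) i = Xz p d j m xv k i := by
  unfold Xz
  have h0 := (hOrd_dvd (j := j) he hd (hOrd p j)).2 dvd_rfl
  obtain ⟨q, hq⟩ : ∃ q, hOrd p j = q + 1 := ⟨hOrd p j - 1, by have := hOrd_pos (j := j) hp; omega⟩
  rw [hq] at h0 ⊢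
  rw [Finset.prod_range_succ, Finset.prod_range_succ']
  congr 1
  · refine Finset.prod_congr rfl fun s _ => ?_
    congr 1
    push_cast
    ring
  · congr 1
    rw [add_assoc, ← Nat.cast_add]
    congr 1
    rw [show j * d + q * (j * d) = (q + 1) * j * d by ring, h0]
    simp

lemma xval_prod {e p d j : ℕ} [NeZero e] (he : p * d = e) (hd : 0 < d)
    (m : ZMod e → ℕ) (xv : BIdx e m → ℂ) (k : ZMod e) (i t : ℕ) :
    ∏ s ∈ Finset.range (hOrd p j * t), xval e m xv (k + ((s * (j * d) : ℕ) : ZMod e)) i =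
      Xz p d j m xv k i ^ t := by
  induction t with
  | zero => simp
  | succ t ih =>
    rw [Nat.mul_succ, Finset.prod_range_add, ih, pow_succ]
    congr 1
    unfold Xz
    refine Finset.prod_congr rfl fun s _ => ?_
    congr 2
    have h0 := (hOrd_dvd (j := j) he hd (hOrd p j * t)).2 (Dvd.intro _ rfl)
    rw [show (hOrd p j * t + s) * (j * d) = hOrd p j * t * j * d + s * (j * d) by ring,
      Nat.cast_add, h0, zero_add]

lemma sum_periodic (g : ℕ → ℂ) (N h : ℕ) (hg : ∀ k, g (N + k) = g k) :
    ∑ k ∈ Finset.range (N * h), g k = h * ∑ k ∈ Finset.range N, g k := by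
  have hg2 : ∀ t k, g (N * t + k) = g k := by
    intro t
    induction t with
    | zero => simp
    | succ t ih =>
      intro k
      rw [Nat.mul_succ, add_assoc, ih, hg]
  induction h with
  | zero => simp
  | succ t ih =>
    rw [Nat.mul_succ, Finset.sum_range_add, ih]
    simp only [hg2]
    push_cast
    ring

lemma sum_zmod {e : ℕ} [NeZero e] (f : ZMod e → ℂ) :
    ∑ k : ZMod e, f k = ∑ k ∈ Finset.range e, f (k : ZMod e) := by
  refine Finset.sum_nbij' (fun k => k.val) (fun k => (k : ZMod e)) ?_ ?_ ?_ ?_ ?_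
  · intro k _
    simpa using ZMod.val_lt k
  · simp
  · intro k _; simp
  · intro k hk
    exact ZMod.val_cast_of_lt (by simpa using hk)
  · intro k _; simp

noncomputable def SS {e : ℕ} [NeZero e] (d j : ℕ) (ζ : ℂ) (m : ZMod e → ℕ) (xv : BIdx e m → ℂ)
    (k : ZMod e) (r : ℕ) : ℂ :=
  ∑ c : BIdx e m, zmpow e ζ (k * c.1) *
    ∏ s ∈ Finset.range r, xval e m xv (c.1 + ((s * (j * d) : ℕ) : ZMod e)) c.2.val

lemma SS_eval {e p d j : ℕ} [NeZero e] (he : p * d = e) (hd : 0 < d) (hp : 0 < p)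
    {ζ : ℂ} (hζ : IsPrimitiveRoot ζ e) (m : ZMod e → ℕ)
    (hm : ∀ k, m (k + (d : ZMod e)) = m k) (xv : BIdx e m → ℂ)
    (k : ZMod e) (r : ℕ) (hr : 0 < r) (hh : hOrd p j ∣ r) :
    SS d j ζ m xv k r = if hOrd p j ∣ k.val then
      hOrd p j * pGenSys (ζ ^ hOrd p j) (Esys p d j) (mmX e m) (vvX e p d m xv j)
        (k.val / hOrd p j) (r / hOrd p j) else 0 := by
  obtain ⟨t, rfl⟩ := hh
  have hpos := hOrd_pos (j := j) hp
  have ht : t ≠ 0 := by rintro rfl; simp at hr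
  rw [Nat.mul_div_cancel_left _ hpos]
  have hmj : ∀ N : ℕ, ∀ k, m (k + ((N * d : ℕ) : ZMod e)) = m k := by
    intro N
    induction N with
    | zero => simp
    | succ N ih =>
      intro k
      rw [Nat.succ_mul, Nat.cast_add, ← add_assoc, hm, ih]
  let P : ZMod e → ℂ := fun k0 => ∑ i ∈ Finset.range (m k0), Xz p d j m xv k0 i ^ t
  have hP : Function.Periodic P ((j * d : ℕ) : ZMod e) := by
    intro k0
    simp only [P]
    rw [hmj]
    refine Finset.sum_congr rfl fun i _ => ?_
    rw [Xz_periodic he hd hp]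
  have hS : SS d j ζ m xv k (hOrd p j * t) = ∑ k0 : ZMod e, zmpow e ζ (k * k0) * P k0 := by
    unfold SS
    rw [Fintype.sum_sigma]
    refine Finset.sum_congr rfl fun k0 _ => ?_
    dsimp only
    rw [← Finset.mul_sum]
    congr 1
    simp only [xval_prod he hd, P]
    exact Fin.sum_univ_eq_sum_range (fun i => Xz p d j m xv k0 i ^ t) (m k0)
  have hkj : k * ((j * d : ℕ) : ZMod e) = 0 ↔ hOrd p j ∣ k.val := by
    rw [← hOrd_dvd he hd]
    push_cast
    rw [ZMod.natCast_zmod_val, mul_assoc]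
  rw [hS]
  split_ifs with hk
  · obtain ⟨y, hy⟩ := Esys_bezout (j := j) he hp
    have hP2 : Function.Periodic P ((Esys p d j : ℕ) : ZMod e) := by
      rw [hy]
      exact hP.int_mul y
    have hkE : k * ((Esys p d j : ℕ) : ZMod e) = 0 := by
      rw [hy, mul_left_comm, hkj.2 hk, mul_zero]
    rw [sum_zmod]
    have := sum_periodic (fun k0 : ℕ => zmpow e ζ (k * (k0 : ZMod e)) * P (k0 : ZMod e))
      (Esys p d j) (hOrd p j) (by
        intro k0
        rw [Nat.cast_add, mul_add, hkE, zero_add, add_comm, hP2])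
    rw [Esys_mul he] at this
    rw [this]
    congr 1
    rw [pGenSys, if_neg ht]
    refine Finset.sum_congr rfl fun k0 _ => ?_
    congr 1
    · rw [← pow_mul, ← zm_nat hζ, ← mul_assoc, Nat.mul_div_cancel' hk]
      simp
    · simp only [P, mmX, vvX, Xvar_eq]
  · have h1 : ∑ k0 : ZMod e, zmpow e ζ (k * k0) * P k0 =
        zmpow e ζ (k * ((j * d : ℕ) : ZMod e)) * ∑ k0 : ZMod e, zmpow e ζ (k * k0) * P k0 := by
      rw [Finset.mul_sum]
      symm
      refine Fintype.sum_equiv (Equiv.addRight ((j * d : ℕ) : ZMod e)) _ _ fun k0 => ?_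
      rw [Equiv.coe_addRight, hP, mul_add, zm_add hζ]
      ring
    have h2 : zmpow e ζ (k * ((j * d : ℕ) : ZMod e)) ≠ 1 := by
      rw [Ne, zm_eq_one hζ, hkj]
      exact hk
    by_contra h3
    exact h2 (mul_right_cancel₀ h3 (by rw [one_mul]; exact h1.symm))

lemma FF_exc {e p d j : ℕ} [NeZero e] (he : p * d = e) (hd : 0 < d)
    {ζ : ℂ} (hζ : IsPrimitiveRoot ζ e) (m : ZMod e → ℕ)
    (hm : ∀ k, m (k + (d : ZMod e)) = m k) (xv : BIdx e m → ℂ)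
    (r : ℕ) (hr : 0 < r) (k b : ZMod e) (a : Fin r → ZMod e)
    (ha : ∀ s : Fin r, a s = (if (s : ℕ) = 0 then k - b else 0) + (if (s : ℕ) = r - 1 then b else 0)) :
    FF d j ζ m hm xv (finRotate r) a =
      if hOrd p j ∣ r then
        zmpow e ζ (-((k + b) * ((j * d : ℕ) : ZMod e))) * SS d j ζ m xv k r else 0 := by
  rw [FF_cycle _ _ _ _ _ _ _ hr]
  refine if_ctx_congr (hOrd_dvd he hd r) (fun hh => ?_) (fun _ => rfl)
  have h0 := (hOrd_dvd he hd r).2 hh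
  unfold SS
  rw [Finset.mul_sum]
  refine Finset.sum_congr rfl fun c _ => ?_
  rw [Finset.prod_mul_distrib, ← zm_sum hζ, ← mul_assoc, ← zm_add hζ, mul_comm,
    Fin.prod_univ_eq_prod_range (fun s => xval e m xv (c.1 + ((s * (j * d) : ℕ) : ZMod e)) c.2.val) r]
  congr 2
  simp only [ha, add_mul, Finset.sum_add_distrib]
  rw [Finset.sum_eq_single (⟨0, hr⟩ : Fin r), Finset.sum_eq_single (⟨r - 1, by omega⟩ : Fin r)]
  · simp only [if_true]
    obtain ⟨q, rfl⟩ : ∃ q, r = q + 1 := ⟨r - 1, by omega⟩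
    rw [Nat.add_sub_cancel]
    push_cast at h0 ⊢
    linear_combination b * h0
  · intro s _ hs
    rw [if_neg (fun h => hs (Fin.ext h)), zero_mul]
  · simp
  · intro s _ hs
    rw [if_neg (fun h => hs (Fin.ext h)), zero_mul]
  · simp

end GreenII
namespace GreenII

lemma partsList_prod {e : ℕ} [NeZero e] {M : Type*} [CommMonoid M] (α : ZMod e → Multiset ℕ)
    (f : ℕ × ZMod e → M) :
    ((partsList e α).map f).prod = ∏ k : ZMod e, ((α k).map (fun r => f (r, k))).prod := by
  unfold partsList
  rw [List.map_flatMap, List.flatMap_def, List.prod_flatten, List.map_map, ← Finset.prod_map_toList]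
  congr 1
  refine List.map_congr_left fun k _ => ?_
  simp only [Function.comp, List.map_map]
  conv_rhs => rw [← Multiset.coe_toList (α k), Multiset.map_coe, Multiset.prod_coe]
  rfl

lemma partsList_sum {e : ℕ} [NeZero e] (α : ZMod e → Multiset ℕ) :
    ((partsList e α).map Prod.fst).sum = ∑ k : ZMod e, (α k).sum := by
  have := partsList_prod (M := Multiplicative ℕ) α (fun x => Multiplicative.ofAdd x.1)
  have h2 := congrArg Multiplicative.toAdd this
  rw [toAdd_prod] at h2
  simp only [toAdd_list_sum, toAdd_multiset_sum] at h2
  simp at h2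
  exact h2

lemma mem_partsList {e : ℕ} [NeZero e] (α : ZMod e → Multiset ℕ) (x : ℕ × ZMod e) :
    x ∈ partsList e α ↔ x.1 ∈ α x.2 := by
  unfold partsList
  simp only [List.mem_flatMap, Finset.mem_toList, Finset.mem_univ, true_and, List.mem_map,
    Multiset.mem_toList]
  constructor
  · rintro ⟨k, r, h, rfl⟩; exact h
  · intro h; exact ⟨x.2, x.1, h, rfl⟩

noncomputable def GG {e : ℕ} [NeZero e] (p d j : ℕ) (ζ : ℂ) (m : ZMod e → ℕ) (xv : BIdx e m → ℂ)
    (x : ℕ × ZMod e) : ℂ :=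
  if hOrd p j ∣ x.1 then
    zmpow e ζ (-(x.2 * ((j * d : ℕ) : ZMod e))) * SS d j ζ m xv x.2 x.1 else 0

lemma FF_list {e p d j : ℕ} [NeZero e] (he : p * d = e) (hd : 0 < d)
    {ζ : ℂ} (hζ : IsPrimitiveRoot ζ e) (m : ZMod e → ℕ)
    (hm : ∀ k, m (k + (d : ZMod e)) = m k) (xv : BIdx e m → ℂ) (b : ZMod e)
    (L : List (ℕ × ZMod e)) (hL : ∀ x ∈ L, 0 < x.1) (hne : 0 < L.length) :
    FF d j ζ m hm xv (Equiv.sigmaCongrRight fun i : Fin L.length => finRotate (L.get i).1)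
      (aexc e L b) =
      zmpow e ζ (-(b * ((j * d : ℕ) : ZMod e))) * (L.map (GG p d j ζ m xv)).prod := by
  rw [FF_sigma]
  have h1 : ∀ i : Fin L.length,
      FF d j ζ m hm xv (finRotate (L.get i).1) (fun s => aexc e L b ⟨i, s⟩) =
      (if i = ⟨0, hne⟩ then zmpow e ζ (-(b * ((j * d : ℕ) : ZMod e))) else 1) *
        GG p d j ζ m xv (L.get i) := by
    intro i
    have hr := hL _ (L.get_mem i)
    rw [FF_exc he hd hζ m hm xv _ hr (L.get i).2 (if i = ⟨0, hne⟩ then b else 0)]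
    · unfold GG
      split_ifs
      · rw [← mul_assoc, ← zm_add hζ]
        congr 2
        ring
      · simp
      · simp
      · simp
    · intro s
      unfold aexc
      simp only [Fin.ext_iff]
      by_cases hi : (i : ℕ) = 0
      · simp [hi]
      · simp [hi]
  rw [Finset.prod_congr rfl (fun i _ => h1 i), Finset.prod_mul_distrib, Finset.prod_ite_eq']
  simp only [Finset.mem_univ, if_true]
  congr 1
  conv_rhs => rw [← List.ofFn_get L, List.map_ofFn, List.prod_ofFn]
  simp

lemma FF_wrep {e p d j n : ℕ} [NeZero e] [NeZero n] (he : p * d = e) (hd : 0 < d)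
    {ζ : ℂ} (hζ : IsPrimitiveRoot ζ e) (m : ZMod e → ℕ)
    (hm : ∀ k, m (k + (d : ZMod e)) = m k) (xv : BIdx e m → ℂ) (b : ZMod e)
    (α : ZMod e → Multiset ℕ) (hα : IsEPartition e n α) :
    FF d j ζ m hm xv (wrep e n α b).right (fun s => ((wrep e n α b).left s).toAdd) =
      zmpow e ζ (-(b * ((j * d : ℕ) : ZMod e))) *
        ∏ k : ZMod e, ((α k).map (fun r => GG p d j ζ m xv (r, k))).prod := by
  have hsum : ((partsList e α).map Prod.fst).sum = n := by rw [partsList_sum, hα.2]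
  have hcard : Fintype.card (Σ i : Fin (partsList e α).length, Fin ((partsList e α).get i).1) = n := by
    rw [Fintype.card_sigma]
    simp only [Fintype.card_fin]
    rw [← hsum]
    conv_rhs => rw [← List.ofFn_get (partsList e α), List.map_ofFn, List.sum_ofFn]
    simp
  have hne : 0 < (partsList e α).length := by
    rw [List.length_pos_iff]
    intro h
    rw [h] at hsum
    exact NeZero.ne n (by simpa using hsum.symm)
  unfold wrep
  rw [dif_pos hcard]
  dsimp only
  rw [← partsList_prod α (GG p d j ζ m xv), ← FF_list he hd hζ m hm xv b _ ?_ hne]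
  · exact FF_reindex d j ζ m hm xv (Fintype.equivFinOfCardEq hcard)
      (Equiv.sigmaCongrRight fun i => finRotate _) (aexc e (partsList e α) b)
  · intro x hx
    exact hα.1 _ _ ((mem_partsList α x).1 hx)

lemma prod_mult {e h E : ℕ} [NeZero e] (he : E * h = e) (f : ZMod e → ℂ)
    (hf : ∀ k, ¬ h ∣ k.val → f k = 1) :
    ∏ k : ZMod e, f k = ∏ k ∈ Finset.range E, f ((h * k : ℕ) : ZMod e) := by
  have hh : 0 < h := by
    rcases Nat.eq_zero_or_pos h with rfl | h'
    · exact absurd he.symm (by simpa using NeZero.ne e)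
    · exact h'
  rw [← Finset.prod_filter_of_ne (p := fun k : ZMod e => h ∣ k.val)
    (fun k _ hk => by by_contra h'; exact hk (hf k h'))]
  have hlt : ∀ k, k < E → h * k < e := by
    intro k hk
    rw [← he, mul_comm]
    exact Nat.mul_lt_mul_of_pos_right hk hh
  refine Finset.prod_nbij' (fun k => k.val / h) (fun k => ((h * k : ℕ) : ZMod e)) ?_ ?_ ?_ ?_ ?_
  · intro k _
    have := ZMod.val_lt k
    simp only [Finset.mem_range]
    exact Nat.div_lt_of_lt_mul (by rw [mul_comm h, he]; exact this)
  · intro k hk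
    simp only [Finset.mem_range] at hk
    simp only [Finset.mem_filter, Finset.mem_univ, true_and]
    rw [ZMod.val_cast_of_lt (hlt k hk)]
    exact Dvd.intro _ rfl
  · intro k hk
    simp only [Finset.mem_filter, Finset.mem_univ, true_and] at hk
    rw [Nat.mul_div_cancel' hk, ZMod.natCast_zmod_val]
  · intro k hk
    simp only [Finset.mem_range] at hk
    rw [ZMod.val_cast_of_lt (hlt k hk), Nat.mul_div_cancel_left _ hh]
  · intro k hk
    simp only [Finset.mem_filter, Finset.mem_univ, true_and] at hk
    rw [Nat.mul_div_cancel' hk, ZMod.natCast_zmod_val]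

lemma final_prod {e p d j n : ℕ} [NeZero e] (he : p * d = e) (hd : 0 < d) (hp : 0 < p)
    {ζ : ℂ} (hζ : IsPrimitiveRoot ζ e) (m : ZMod e → ℕ)
    (hm : ∀ k, m (k + (d : ZMod e)) = m k) (xv : BIdx e m → ℂ)
    (α : ZMod e → Multiset ℕ) (hα : IsEPartition e n α) (hc : Cond261 e p j α) :
    ∏ k : ZMod e, ((α k).map (fun r => GG p d j ζ m xv (r, k))).prod =
      zmpow e ζ (-((Delta e α : ZMod e) * ((j * d : ℕ) : ZMod e))) *
      ((hOrd p j : ℂ) ^ (lenBracket e p d j α) * pBracket e p d ζ m xv j α) := by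
  have h1 : ∀ k : ZMod e, ((α k).map (fun r => GG p d j ζ m xv (r, k))).prod =
      zmpow e ζ (-((k * ((α k).card : ZMod e)) * ((j * d : ℕ) : ZMod e))) *
      ((α k).map (fun r => (hOrd p j : ℂ) * pGenSys (ζ ^ hOrd p j) (Esys p d j) (mmX e m)
        (vvX e p d m xv j) (k.val / hOrd p j) (r / hOrd p j))).prod := by
    intro k
    have h2 : (α k).map (fun r => GG p d j ζ m xv (r, k)) =
        (α k).map (fun r => zmpow e ζ (-(k * ((j * d : ℕ) : ZMod e))) *
        ((hOrd p j : ℂ) * pGenSys (ζ ^ hOrd p j) (Esys p d j) (mmX e m)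
        (vvX e p d m xv j) (k.val / hOrd p j) (r / hOrd p j))) := by
      refine Multiset.map_congr rfl fun r hr => ?_
      unfold GG
      rw [if_pos (hc.1 k r hr), SS_eval he hd hp hζ m hm xv k r (hα.1 k r hr) (hc.1 k r hr),
        if_pos (hc.2 k (fun h => by simp [h] at hr))]
    rw [h2, Multiset.prod_map_mul]
    congr 1
    rw [Multiset.map_const', Multiset.prod_replicate]
    have h3 : ∀ (c : ZMod e) (N : ℕ), zmpow e ζ c ^ N = zmpow e ζ (N * c) := by
      intro c N
      have := zm_sum hζ (Finset.range N) (fun _ => c)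
      simpa using this.symm
    rw [h3]
    congr 1
    ring
  rw [Finset.prod_congr rfl (fun k _ => h1 k), Finset.prod_mul_distrib, ← zm_sum hζ]
  congr 1
  · congr 1
    rw [Finset.sum_neg_distrib, ← Finset.sum_mul]
    unfold Delta
    push_cast
    simp
  · rw [prod_mult (Esys_mul (j := j) he)]
    · unfold lenBracket pBracket pAlphaSys
      rw [← Finset.prod_pow_eq_pow_sum, ← Finset.prod_mul_distrib]
      refine Finset.prod_congr rfl fun k hk => ?_
      rw [Finset.mem_range] at hk
      have hpos := hOrd_pos (j := j) hp
      have hlt : hOrd p j * k < e := by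
        rw [← Esys_mul (j := j) he, mul_comm]
        exact Nat.mul_lt_mul_of_pos_right hk hpos
      rw [bracketF, if_pos hk, Multiset.prod_map_mul, Multiset.map_map, Multiset.card_map,
        Multiset.map_const', Multiset.prod_replicate, ZMod.val_cast_of_lt hlt,
        Nat.mul_div_cancel_left _ hpos]
      rfl
    · intro k hk
      have : α k = 0 := by
        by_contra h
        exact hk (hc.2 k h)
      simp [this]

lemma final_zero {e p d j n : ℕ} [NeZero e] (he : p * d = e) (hd : 0 < d) (hp : 0 < p)
    {ζ : ℂ} (hζ : IsPrimitiveRoot ζ e) (m : ZMod e → ℕ)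
    (hm : ∀ k, m (k + (d : ZMod e)) = m k) (xv : BIdx e m → ℂ)
    (α : ZMod e → Multiset ℕ) (hα : IsEPartition e n α) (hc : ¬ Cond261 e p j α) :
    ∏ k : ZMod e, ((α k).map (fun r => GG p d j ζ m xv (r, k))).prod = 0 := by
  have key : ∃ k, ∃ r ∈ α k, GG p d j ζ m xv (r, k) = 0 := by
    by_cases h1 : ∀ k, ∀ r ∈ α k, hOrd p j ∣ r
    · have h2 : ¬ ∀ k : ZMod e, α k ≠ 0 → hOrd p j ∣ k.val := fun h => hc ⟨h1, h⟩
      push Not at h2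
      obtain ⟨k, hk, hk2⟩ := h2
      obtain ⟨r, hr⟩ := Multiset.exists_mem_of_ne_zero hk
      refine ⟨k, r, hr, ?_⟩
      unfold GG
      rw [if_pos (h1 k r hr), SS_eval he hd hp hζ m hm xv k r (hα.1 k r hr) (h1 k r hr),
        if_neg hk2, mul_zero]
    · push Not at h1
      obtain ⟨k, r, hr, h⟩ := h1
      exact ⟨k, r, hr, if_neg h⟩
  obtain ⟨k, r, hr, h⟩ := key
  refine Finset.prod_eq_zero (Finset.mem_univ k) ?_
  rw [Multiset.prod_eq_zero_iff, Multiset.mem_map]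
  exact ⟨r, hr, h⟩

end GreenII

namespace GreenII

/-- Proposition 2.7.  Assume `w ∈ C_α` in `W̃` and that `w`
is conjugate under `W` to `w_α(b)`.  Then `Tr(Dτ^j w, V^{⊗n}) = 0` unless `α`
satisfies (2.6.1), in which case
`Tr(Dτ^j w, V^{⊗n}) = h^{l(α[j])} ζ^{-(Δ(α)+b)jd} p_{α[j]}(𝒳_j)`. -/
theorem statement2 (e p d n : ℕ) [NeZero e] [NeZero n] (hp : p ∣ e) (hd : d = e / p)
    (ζ : ℂ) (hζ : IsPrimitiveRoot ζ e)
    (m : ZMod e → ℕ) (hmn : ∀ k, n ≤ m k) (hm : ∀ k, m (k + (d : ZMod e)) = m k)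
    (xv : BIdx e m → ℂ)
    (α : ZMod e → Multiset ℕ) (hα : IsEPartition e n α) (b : ZMod e)
    (j : ℕ) (hj : j < p)
    (w : Wt e n)
    (hclass : classOf e n w = α)
    (hconj : IsConjW e p n hp (wrep e n α b) w) :
    Matrix.trace (Dmat e n m xv * (tauMat e n d m hm) ^ j * rhoMat e n ζ m w) =
      if Cond261 e p j α then
        (hOrd p j : ℂ) ^ (lenBracket e p d j α) *
          zmpow e ζ (-(((Delta e α : ZMod e) + b) * ((j * d : ℕ) : ZMod e))) *
          pBracket e p d ζ m xv j α
      else 0 := by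
  have he : p * d = e := by rw [hd]; exact Nat.mul_div_cancel' hp
  have hp0 : 0 < p := by omega
  have hd0 : 0 < d := by
    rcases Nat.eq_zero_or_pos d with h | h
    · rw [h, mul_zero] at he
      exact absurd he.symm (NeZero.ne e)
    · exact h
  rw [trace_eq d j hζ, FF_conj p d j hp hd hζ m hm xv _ _ hconj, FF_wrep he hd0 hζ m hm xv b α hα]
  split_ifs with hc
  · rw [final_prod he hd0 hp0 hζ m hm xv α hα hc, ← mul_assoc, ← zm_add hζ]
    rw [show -(b * ((j * d : ℕ) : ZMod e)) + -((Delta e α : ZMod e) * ((j * d : ℕ) : ZMod e)) =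
      -(((Delta e α : ZMod e) + b) * ((j * d : ℕ) : ZMod e)) by ring]
    ring
  · rw [final_zero he hd0 hp0 hζ m hm xv α hα hc, mul_zero]

end GreenII
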